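/- Let Q be a left distributive quasigroup and let a ∈ Q. The following conditions are equivalent: (i) for every x ∈ Q with x ≠ a, the subquasigroup generated by {a, x} is normal in Q; (ii) every subquasigroup of Q generated by two elements is normal in Q; (iii) Q is hamiltonian. -/

import Mathlib

/-- A (binary operation on a nonempty set is a) quasigroup: all left and right
translations are bijections. -/
def IsQuasigroup {Q : Type*} (mul : Q → Q → Q) : Prop :=
  Nonempty Q ∧ ∀ a : Q,
    Function.Bijective (fun x => mul a x) ∧ Function.Bijective (fun x => mul x a)

/-- A subquasigroup: a nonempty subset closed under multiplication and under both
divisions (the unique solutions of `a·x = b` and `y·a = b` for `a, b ∈ P` lie in `P`). -/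
def IsSubquasigroup {Q : Type*} (mul : Q → Q → Q) (P : Set Q) : Prop :=
  P.Nonempty ∧ ∀ a ∈ P, ∀ b ∈ P,
    mul a b ∈ P ∧ (∀ x, mul a x = b → x ∈ P) ∧ (∀ y, mul y a = b → y ∈ P)

/-- A normal congruence: an equivalence relation satisfying (C1), (C2), (C3). -/
def IsNormalCongruence {Q : Type*} (mul : Q → Q → Q) (r : Q → Q → Prop) : Prop :=
  Equivalence r ∧
  (∀ a b c d, r a b → r c d → r (mul a c) (mul b d)) ∧
  (∀ a b c d, r a b → r (mul a c) (mul b d) → r c d) ∧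
  (∀ a b c d, r c d → r (mul a c) (mul b d) → r a b)

/-- A subquasigroup is normal if it is an equivalence class of some normal congruence. -/
def IsNormalSubquasigroup {Q : Type*} (mul : Q → Q → Q) (P : Set Q) : Prop :=
  IsSubquasigroup mul P ∧
  ∃ r : Q → Q → Prop, IsNormalCongruence mul r ∧ ∃ a : Q, P = {x | r a x}

/-- A quasigroup is hamiltonian if every subquasigroup is normal. -/
def IsHamiltonian {Q : Type*} (mul : Q → Q → Q) : Prop :=
  ∀ P : Set Q, IsSubquasigroup mul P → IsNormalSubquasigroup mul P

/-- The subquasigroup generated by a subset `S`: the smallest subquasigroup containing `S`. -/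
def genSubquasigroup {Q : Type*} (mul : Q → Q → Q) (S : Set Q) : Set Q :=
  ⋂₀ {P : Set Q | IsSubquasigroup mul P ∧ S ⊆ P}

/-!
A supremum of normal congruences is again normal, because a normal congruence is an equivalence
relation invariant under pullback along all translations, and pullback along a bijection commutes
with suprema. Given a subquasigroup `P` and `a ∈ P`, take the supremum of all normal congruences
whose class of `a` lies in `P`. Each such congruence `r` saturates `P`: if `y = c·a ∈ P` is
`r`-related to `z = c·t`, then `c ∈ P` and `r a t`, so `t ∈ P` and hence `z ∈ P`. The supremum
therefore saturates `P` too, and `P` is its class of `a` as soon as every other point of `P` lies in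
a normal subquasigroup through `a` contained in `P`. A subquasigroup that misses `a` is first moved
by an automorphism, which left distributivity provides in the form of a left translation.
-/

open Function Set

section

theorem comap_sSup_equiv {α β : Type*} (f : α ≃ β) (S : Set (Setoid β)) :
    (sSup S).comap f = ⨆ r ∈ S, r.comap f := by
  apply le_antisymm
  · have hle : sSup S ≤ (⨆ r ∈ S, r.comap f).comap f.symm := sSup_le fun r hr x y hxy =>
      le_iSup₂ (f := fun r (_ : r ∈ S) => r.comap f) r hr
        (by simpa only [Setoid.comap_rel, f.apply_symm_apply] using hxy)
    intro x y hxy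
    simpa only [Setoid.comap_rel, f.symm_apply_apply] using hle hxy
  · exact iSup₂_le fun r hr x y hxy => le_sSup hr hxy

theorem semiconj₂_symm {α β : Type*} {ga : α → α → α} {gb : β → β → β} {f : α ≃ β}
    (hf : Semiconj₂ f ga gb) : Semiconj₂ f.symm gb ga := fun x y =>
  f.injective <| by simp only [hf.eq, f.apply_symm_apply]

variable {Q Q' : Type*} {mul : Q → Q → Q} {mul' : Q' → Q' → Q'} {P : Set Q} {a : Q}

theorem isNormalCongruence_iff_comap_eq {r : Setoid Q} :
    IsNormalCongruence mul r ↔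
      ∀ a, r.comap (fun x => mul a x) = r ∧ r.comap (fun x => mul x a) = r := by
  constructor
  · rintro ⟨-, hmul, hleft, hright⟩ a
    exact ⟨Setoid.ext fun x y => ⟨hleft a a x y (r.refl a), hmul a a x y (r.refl a)⟩,
      Setoid.ext fun x y =>
        ⟨fun h => hright x y a a (r.refl a) h, fun h => hmul x y a a h (r.refl a)⟩⟩
  · intro h
    have left_iff (a x y : Q) : r (mul a x) (mul a y) ↔ r x y := Setoid.ext_iff.1 (h a).1 x y
    have right_iff (a x y : Q) : r (mul x a) (mul y a) ↔ r x y := Setoid.ext_iff.1 (h a).2 x y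
    refine ⟨r.iseqv, fun a b c d hab hcd => ?_, fun a b c d hab h => ?_, fun a b c d hcd h => ?_⟩
    · exact r.trans ((right_iff c a b).2 hab) ((left_iff b c d).2 hcd)
    · exact (left_iff b c d).1 (r.trans (r.symm ((right_iff c a b).2 hab)) h)
    · exact (right_iff d a b).1 (r.trans (r.symm ((left_iff a c d).2 hcd)) h)

theorem isNormalCongruence_sSup (hQ : IsQuasigroup mul) {S : Set (Setoid Q)}
    (hS : ∀ r ∈ S, IsNormalCongruence mul r) : IsNormalCongruence mul ⇑(sSup S) := by
  have comap_eq (f : Q ≃ Q) (h : ∀ r ∈ S, r.comap f = r) : (sSup S).comap f = sSup S := by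
    rw [comap_sSup_equiv, sSup_eq_iSup]
    exact iSup_congr fun r => iSup_congr (h r)
  have comap_translation_eq (r : Setoid Q) (hr : r ∈ S) :=
    isNormalCongruence_iff_comap_eq.1 (hS r hr)
  exact isNormalCongruence_iff_comap_eq.2 fun a =>
    ⟨comap_eq (.ofBijective _ (hQ.2 a).1) fun r hr => (comap_translation_eq r hr a).1,
      comap_eq (.ofBijective _ (hQ.2 a).2) fun r hr => (comap_translation_eq r hr a).2⟩

theorem IsNormalCongruence.comap {r : Q' → Q' → Prop} (hr : IsNormalCongruence mul' r) {f : Q → Q'}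
    (hf : Semiconj₂ f mul mul') : IsNormalCongruence mul (fun x y => r (f x) (f y)) := by
  obtain ⟨hequiv, hmul, hleft, hright⟩ := hr
  refine ⟨hequiv.comap f, fun a b c d => ?_, fun a b c d => ?_, fun a b c d => ?_⟩ <;>
    simp only [hf.eq]
  exacts [hmul _ _ _ _, hleft _ _ _ _, hright _ _ _ _]

theorem IsNormalCongruence.mem_of_mem {r : Q → Q → Prop} (hr : IsNormalCongruence mul r)
    (hQ : IsQuasigroup mul) (hP : IsSubquasigroup mul P) (ha : a ∈ P) (hrP : {x | r a x} ⊆ P)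
    {y z : Q} (hyz : r y z) (hy : y ∈ P) : z ∈ P := by
  obtain ⟨c, rfl⟩ := (hQ.2 a).2.surjective y
  obtain ⟨t, rfl⟩ := (hQ.2 c).1.surjective z
  have hc : c ∈ P := (hP.2 a ha _ hy).2.2 c rfl
  have hat : r a t := hr.2.2.1 c c a t (hr.1.refl c) hyz
  exact (hP.2 c hc t (hrP hat)).1

theorem IsSubquasigroup.preimage {P' : Set Q'} (hP : IsSubquasigroup mul' P') {f : Q → Q'}
    (hf : Semiconj₂ f mul mul') (hsurj : Surjective f) : IsSubquasigroup mul (f ⁻¹' P') := by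
  refine ⟨hP.1.preimage hsurj, fun u hu v hv => ⟨?_, ?_, ?_⟩⟩
  · simpa only [mem_preimage, hf.eq] using (hP.2 _ hu _ hv).1
  · rintro x rfl
    exact (hP.2 _ hu _ hv).2.1 _ (hf u x).symm
  · rintro y rfl
    exact (hP.2 _ hu _ hv).2.2 _ (hf y u).symm

theorem subset_genSubquasigroup (S : Set Q) : S ⊆ genSubquasigroup mul S :=
  subset_sInter fun _ hP => hP.2

theorem genSubquasigroup_subset {S : Set Q} (hP : IsSubquasigroup mul P) (hS : S ⊆ P) :
    genSubquasigroup mul S ⊆ P :=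
  sInter_subset_of_mem ⟨hP, hS⟩

theorem isSubquasigroup_genSubquasigroup {S : Set Q} (hS : S.Nonempty) :
    IsSubquasigroup mul (genSubquasigroup mul S) := by
  refine ⟨hS.mono (subset_genSubquasigroup S), fun u hu v hv => ⟨?_, ?_, ?_⟩⟩
  · exact fun P hP => (hP.1.2 u (hu P hP) v (hv P hP)).1
  · exact fun x hx P hP => (hP.1.2 u (hu P hP) v (hv P hP)).2.1 x hx
  · exact fun y hy P hP => (hP.1.2 u (hu P hP) v (hv P hP)).2.2 y hy

theorem IsNormalSubquasigroup.preimage {P' : Set Q'} (hP : IsNormalSubquasigroup mul' P')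
    {f : Q → Q'} (hf : Semiconj₂ f mul mul') (hsurj : Surjective f) :
    IsNormalSubquasigroup mul (f ⁻¹' P') := by
  obtain ⟨hsub, r, hr, c, rfl⟩ := hP
  obtain ⟨b, rfl⟩ := hsurj c
  exact ⟨hsub.preimage hf hsurj, _, hr.comap hf, b, rfl⟩

theorem IsNormalSubquasigroup.exists_eq_class (hP : IsNormalSubquasigroup mul P) (ha : a ∈ P) :
    ∃ r : Setoid Q, IsNormalCongruence mul r ∧ P = {x | r a x} := by
  obtain ⟨-, r, hr, c, rfl⟩ := hP
  exact ⟨⟨r, hr.1⟩, hr, ext fun x => ⟨hr.1.trans (hr.1.symm ha), hr.1.trans ha⟩⟩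

theorem IsSubquasigroup.isNormalSubquasigroup_of_forall_exists (hP : IsSubquasigroup mul P)
    (hQ : IsQuasigroup mul) (ha : a ∈ P)
    (h : ∀ x ∈ P, x ≠ a → ∃ N ⊆ P, IsNormalSubquasigroup mul N ∧ a ∈ N ∧ x ∈ N) :
    IsNormalSubquasigroup mul P := by
  let S : Set (Setoid Q) := {r | IsNormalCongruence mul r ∧ {x | r a x} ⊆ P}
  have saturated : sSup S ≤ Setoid.ker (· ∈ P) := sSup_le fun r hr y z hyz =>
    propext ⟨hr.1.mem_of_mem hQ hP ha hr.2 hyz,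
      hr.1.mem_of_mem hQ hP ha hr.2 (r.symm hyz)⟩
  have class_subset : {x | sSup S a x} ⊆ P := fun x hax => (saturated hax).mp ha
  have subset_class : P ⊆ {x | sSup S a x} := by
    intro x hx
    obtain rfl | hxa := eq_or_ne x a
    · exact (sSup S).refl x
    obtain ⟨N, hNP, hN, haN, hxN⟩ := h x hx hxa
    obtain ⟨r, hr, rfl⟩ := hN.exists_eq_class haN
    exact le_sSup (show r ∈ S from ⟨hr, hNP⟩) hxN
  exact ⟨hP, ⇑(sSup S), isNormalCongruence_sSup hQ fun r hr => hr.1, a,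
    subset_class.antisymm class_subset⟩

theorem IsSubquasigroup.isNormalSubquasigroup_of_genSubquasigroup_pair
    (hP : IsSubquasigroup mul P) (hQ : IsQuasigroup mul) (ha : a ∈ P)
    (h : ∀ x ∈ P, x ≠ a → IsNormalSubquasigroup mul (genSubquasigroup mul {a, x})) :
    IsNormalSubquasigroup mul P :=
  hP.isNormalSubquasigroup_of_forall_exists hQ ha fun x hx hxa =>
    ⟨genSubquasigroup mul {a, x}, genSubquasigroup_subset hP (pair_subset ha hx), h x hx hxa,
      subset_genSubquasigroup _ (mem_insert a {x}),
      subset_genSubquasigroup _ (mem_insert_of_mem a (mem_singleton x))⟩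

theorem IsQuasigroup.exists_automorphism_apply_eq_of_leftDistrib (hQ : IsQuasigroup mul)
    (hld : ∀ x a b : Q, mul x (mul a b) = mul (mul x a) (mul x b)) (x y : Q) :
    ∃ f : Q ≃ Q, Semiconj₂ f mul mul ∧ f x = y := by
  obtain ⟨c, hc⟩ := (hQ.2 x).2.surjective y
  exact ⟨Equiv.ofBijective _ (hQ.2 c).1, hld c, hc⟩

theorem two_generated_normal_tfae_general (hQ : IsQuasigroup mul)
    (htrans : ∀ p, ∃ f : Q ≃ Q, Semiconj₂ f mul mul ∧ f p = a) :
    List.TFAE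
      [∀ x : Q, x ≠ a → IsNormalSubquasigroup mul (genSubquasigroup mul {a, x}),
       ∀ u v : Q, u ≠ v → IsNormalSubquasigroup mul (genSubquasigroup mul {u, v}),
       IsHamiltonian mul] := by
  tfae_have 1 → 3 := fun h P hP => by
    obtain ⟨p, hp⟩ := hP.1
    obtain ⟨f, hf, hfp⟩ := htrans p
    have hsub : IsSubquasigroup mul (f.symm ⁻¹' P) :=
      hP.preimage (semiconj₂_symm hf) f.symm.surjective
    have ha : a ∈ f.symm ⁻¹' P := by simpa only [mem_preimage, ← hfp, f.symm_apply_apply] using hp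
    have hnormal : IsNormalSubquasigroup mul (f.symm ⁻¹' P) :=
      hsub.isNormalSubquasigroup_of_genSubquasigroup_pair hQ ha fun x _ => h x
    simpa only [f.preimage_symm_preimage] using hnormal.preimage hf f.surjective
  tfae_have 3 → 2 := fun h u v _ => h _ (isSubquasigroup_genSubquasigroup (insert_nonempty u {v}))
  tfae_have 2 → 1 := fun h x hx => h a x hx.symm
  tfae_finish

end

/-- For a left distributive quasigroup `Q` and `a ∈ Q`, the following are equivalent:
(i) for every `x ≠ a` the subquasigroup generated by `{a, x}` is normal in `Q`;
(ii) every two-generated subquasigroup of `Q` is normal in `Q`;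
(iii) `Q` is hamiltonian. -/
theorem two_generated_normal_tfae {Q : Type*} (mul : Q → Q → Q)
    (hQ : IsQuasigroup mul)
    (hld : ∀ x a b : Q, mul x (mul a b) = mul (mul x a) (mul x b))
    (a : Q) :
    List.TFAE
      [∀ x : Q, x ≠ a → IsNormalSubquasigroup mul (genSubquasigroup mul {a, x}),
       ∀ u v : Q, u ≠ v → IsNormalSubquasigroup mul (genSubquasigroup mul {u, v}),
       IsHamiltonian mul] :=
  two_generated_normal_tfae_general hQ fun p =>
    hQ.exists_automorphism_apply_eq_of_leftDistrib hld p a
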